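/- arXiv:math/0201023 — 7 statements merged into one kernel-verified Lean document; each statement's English description precedes it below -/
import Mathlib

section
/- Let n ≥ 1 and let A ⊆ ℝⁿ be an unbounded set with the c-isometric approximation property for some c > 0. Then μ(A) ≥ 1/(17c). -/
open Filter Metric Bornology RealInnerProductSpace

/-- `f` is an `ε`-nearisometry on `A`: `||f x - f y| - |x - y|| ≤ ε` for all `x, y ∈ A`. -/
def IsNearisometryOn {E F : Type*} [NormedAddCommGroup E] [NormedAddCommGroup F]
    (f : E → F) (A : Set E) (ε : ℝ) : Prop :=
  ∀ x ∈ A, ∀ y ∈ A, |‖f x - f y‖ - ‖x - y‖| ≤ ε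

/-- `u` is a cluster direction of `A`: there is a sequence `(x_j)` in `A` with
`‖x_j‖ → ∞` and `x_j / ‖x_j‖ → u`. -/
def IsClusterDirection {E : Type*} [NormedAddCommGroup E] [NormedSpace ℝ E]
    (A : Set E) (u : E) : Prop :=
  ∃ x : ℕ → E, (∀ j, x j ∈ A) ∧ Tendsto (fun j => ‖x j‖) atTop atTop ∧
    Tendsto (fun j => ‖x j‖⁻¹ • x j) atTop (nhds u)

/-- `μ(A) = μ₁(cd A)`, where `μ₁(X) = inf_{|e|=1} sup {|u ⬝ e| : u ∈ X}` (with `sup ∅ = 0`,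
as is the convention for `Real.sSup`). -/
noncomputable def muDir {E : Type*} [NormedAddCommGroup E] [InnerProductSpace ℝ E]
    (A : Set E) : ℝ :=
  sInf {s | ∃ e : E, ‖e‖ = 1 ∧
    s = sSup {t | ∃ u, IsClusterDirection A u ∧ t = abs ⟪u, e⟫}}

/-- `A ⊆ ℝⁿ` has the `c`-isometric approximation property. -/
def HasIAP {n : ℕ} (c : ℝ) (A : Set (EuclideanSpace ℝ (Fin n))) : Prop :=
  ∀ ε : ℝ, 0 ≤ ε → ∀ f : EuclideanSpace ℝ (Fin n) → EuclideanSpace ℝ (Fin n),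
    IsNearisometryOn f A ε →
    ∃ T : EuclideanSpace ℝ (Fin n) → EuclideanSpace ℝ (Fin n),
      Isometry T ∧ ∀ x ∈ A, ‖T x - f x‖ ≤ c * ε

/-!
Suppose that far away from the origin the points of `A` satisfy `|⟪x, e⟫| ≤ t ‖x‖` for a unit
vector `e`. Let `g` oscillate between `0` and `1` so slowly that `|g r - g s|` is at most
`(1 + 2η) |r - s| / (r + s)`, and shift each `x` by `g ‖x‖` along `e`. To first order this changes
the distance `‖x - y‖` by `|g ‖x‖ - g ‖y‖| * |⟪x - y, e⟫| / ‖x - y‖`, which is at most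
`(1 + 2η) t` because `|⟪x - y, e⟫| ≤ t (‖x‖ + ‖y‖)`.

An isometry cannot follow these oscillations: along `e` its displacement is an affine function of
`x`, bounded on `A` if the isometry stays near the shift. By Banach–Steinhaus and compactness there
is one sequence of points of `A` going to infinity along which all such functions converge. A shift
that is alternately `0` and `1` along a subsequence therefore has distance at least `1 / 2` from
every isometry, and `c (1 + 2η) t ≥ 1 / 2`. Letting `η → 0` and `t → μ(A)` gives `μ(A) ≥ 1 / (2c)`.
-/

section ClusterDirections

variable {E : Type*} [NormedAddCommGroup E]

theorem norm_inv_norm_smul_le_one [NormedSpace ℝ E] (x : E) : ‖‖x‖⁻¹ • x‖ ≤ 1 := by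
  rw [norm_smul, norm_inv, norm_norm]
  exact inv_mul_le_one

theorem IsClusterDirection.norm_le_one [NormedSpace ℝ E] {A : Set E} {u : E}
    (hu : IsClusterDirection A u) : ‖u‖ ≤ 1 := by
  obtain ⟨x, -, -, hxu⟩ := hu
  exact le_of_tendsto' hxu.norm fun j => norm_inv_norm_smul_le_one (x j)

theorem exists_isClusterDirection_tendsto_subseq [NormedSpace ℝ E] [ProperSpace E] {A : Set E}
    {x : ℕ → E} (hxA : ∀ j, x j ∈ A) (hx : Tendsto (fun j => ‖x j‖) atTop atTop) :
    ∃ u, IsClusterDirection A u ∧ ∃ ψ : ℕ → ℕ, StrictMono ψ ∧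
      Tendsto (fun j => ‖x (ψ j)‖⁻¹ • x (ψ j)) atTop (nhds u) := by
  have hbounded : ∀ j, ‖x j‖⁻¹ • x j ∈ closedBall (0 : E) 1 := fun j =>
    mem_closedBall_zero_iff.2 (norm_inv_norm_smul_le_one (x j))
  obtain ⟨u, -, ψ, hψ, hu⟩ := tendsto_subseq_of_bounded isBounded_closedBall hbounded
  exact ⟨u, ⟨x ∘ ψ, fun j => hxA _, hx.comp hψ.tendsto_atTop, hu⟩, ψ, hψ, hu⟩

variable [InnerProductSpace ℝ E]

/-- `sup {|u ⬝ e| : u ∈ cd A}`, the quantity minimised over unit vectors `e` in `μ(A)`; it is `0`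
when `A` has no cluster direction. -/
noncomputable def clusterWidth (A : Set E) (e : E) : ℝ :=
  sSup {t | ∃ u, IsClusterDirection A u ∧ t = |⟪u, e⟫|}

theorem clusterWidth_nonneg (A : Set E) (e : E) : 0 ≤ clusterWidth A e :=
  Real.sSup_nonneg <| by rintro _ ⟨u, -, rfl⟩; exact abs_nonneg _

theorem IsClusterDirection.abs_inner_le_clusterWidth {A : Set E} {u : E}
    (hu : IsClusterDirection A u) (e : E) : |⟪u, e⟫| ≤ clusterWidth A e := by
  refine le_csSup ⟨‖e‖, ?_⟩ ⟨u, hu, rfl⟩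
  rintro _ ⟨v, hv, rfl⟩
  exact (abs_real_inner_le_norm v e).trans
    (mul_le_of_le_one_left (norm_nonneg e) hv.norm_le_one)

theorem eventually_abs_inner_add_le_of_clusterWidth_lt [ProperSpace E] {A : Set E} {e : E} {t : ℝ}
    (ht : clusterWidth A e < t) (C : ℝ) :
    ∀ᶠ x in cobounded E, x ∈ A → |⟪x, e⟫| + C ≤ t * ‖x‖ := by
  by_contra hfreq
  simp only [not_eventually, Classical.not_imp, not_le] at hfreq
  rw [← comap_norm_atTop] at hfreq
  obtain ⟨x, hx, hxAt⟩ := exists_seq_forall_of_frequently hfreq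
  have hnorm : Tendsto (fun j => ‖x j‖) atTop atTop := tendsto_comap_iff.1 hx
  obtain ⟨u, hu, ψ, hψ, hlim⟩ :=
    exists_isClusterDirection_tendsto_subseq (fun j => (hxAt j).1) hnorm
  have hnormψ : Tendsto (fun j => ‖x (ψ j)‖) atTop atTop := hnorm.comp hψ.tendsto_atTop
  have hsum : Tendsto (fun j => |⟪‖x (ψ j)‖⁻¹ • x (ψ j), e⟫| + C * ‖x (ψ j)‖⁻¹) atTop
      (nhds (|⟪u, e⟫| + C * 0)) :=
    (hlim.inner tendsto_const_nhds).abs.add (hnormψ.inv_tendsto_atTop.const_mul C)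
  have hle : t ≤ |⟪u, e⟫| + C * 0 := by
    refine ge_of_tendsto hsum ?_
    filter_upwards [hnormψ.eventually_gt_atTop 0] with j hpos
    rw [real_inner_smul_left, abs_mul, abs_inv, abs_norm, mul_comm C, ← mul_add, inv_mul_eq_div,
      le_div_iff₀ hpos]
    exact (hxAt (ψ j)).2.le
  linarith [hu.abs_inner_le_clusterWidth e]

theorem exists_abs_inner_add_le_mul_max_of_clusterWidth_lt [ProperSpace E] {A : Set E} {e : E}
    {t : ℝ} (ht : clusterWidth A e < t) (C : ℝ) :
    ∃ R > 0, ∀ x ∈ A, |⟪x, e⟫| + C ≤ t * max ‖x‖ R := by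
  have htpos : 0 < t := (clusterWidth_nonneg A e).trans_lt ht
  obtain ⟨M, -, hM⟩ := hasBasis_cobounded_norm.eventually_iff.1
    (eventually_abs_inner_add_le_of_clusterWidth_lt ht C)
  refine ⟨max 1 ((M * ‖e‖ + C) / t), by positivity, fun x hx => ?_⟩
  rcases le_or_gt M ‖x‖ with hfar | hnear
  · exact (hM hfar hx).trans (by gcongr; exact le_max_left _ _)
  · calc |⟪x, e⟫| + C ≤ ‖x‖ * ‖e‖ + C := by gcongr; exact abs_real_inner_le_norm x e
      _ ≤ M * ‖e‖ + C := by gcongr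
      _ = t * ((M * ‖e‖ + C) / t) := by field_simp
      _ ≤ t * max ‖x‖ (max 1 ((M * ‖e‖ + C) / t)) := by
        gcongr
        exact (le_max_right _ _).trans (le_max_right _ _)

end ClusterDirections

section SlowProfiles

/-- `g` is a function of the radius with values in `[0, 1]` whose variation, with constant `K`, is
slow relative to the radius; radii below `R` are counted as `R`. It is the amount by which
`radialShift` moves a point at distance `r` from the origin. -/
structure IsSlowProfile (K R : ℝ) (g : ℝ → ℝ) : Prop where
  mem_Icc : ∀ r, g r ∈ Set.Icc (0 : ℝ) 1
  abs_sub_mul_le : ∀ r s, |g r - g s| * (max r R + max s R) ≤ K * |r - s|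

theorem exists_strictMono_add_le {l : ℕ → ℝ} (hl : Tendsto l atTop atTop) (C : ℝ) :
    ∃ ψ : ℕ → ℕ, StrictMono ψ ∧ ∀ i j, i < j → l (ψ i) + C ≤ l (ψ j) := by
  obtain ⟨ψ, -, hψ⟩ := exists_seq_of_forall_finset_exists (fun _ : ℕ => True)
    (fun i j => i < j ∧ l i + C ≤ l j) fun s _ => by
      have hev : ∀ᶠ j in atTop, ∀ i ∈ s, i < j ∧ l i + C ≤ l j :=
        s.eventually_all.2 fun i _ =>
          (eventually_gt_atTop i).and (hl.eventually_ge_atTop (l i + C))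
      exact hev.exists.imp fun j hj => ⟨trivial, hj⟩
  exact ⟨ψ, fun i j hij => (hψ i j hij).1, fun i j hij => (hψ i j hij).2⟩

theorem mul_add_le_of_le_mul_log_sub {a b d η : ℝ} (hb : 0 < b) (hba : b ≤ a) (hη : 0 ≤ η)
    (hd : d ≤ 1) (hlog : d ≤ η * (Real.log a - Real.log b)) :
    d * (a + b) ≤ (1 + 2 * η) * (a - b) := by
  have ha : 0 < a := hb.trans_le hba
  rcases le_or_gt (a + b) ((1 + 2 * η) * (a - b)) with hfar | hnear
  · exact (mul_le_of_le_one_left (by positivity) hd).trans hfar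
  · have hdb : d * b ≤ η * (a - b) := by
      have hlogle : Real.log a - Real.log b ≤ a / b - 1 := by
        rw [← Real.log_div ha.ne' hb.ne']
        exact Real.log_le_sub_one_of_pos (div_pos ha hb)
      calc d * b ≤ η * (a / b - 1) * b := by gcongr; exact hlog.trans (by gcongr)
        _ = η * (a - b) := by field_simp
    have hηab : η * (a + b) ≤ (1 + 2 * η) * b := by linarith
    refine le_of_mul_le_mul_right ?_ hb
    calc d * (a + b) * b = d * b * (a + b) := by ring
      _ ≤ η * (a - b) * (a + b) := by gcongr
      _ = η * (a + b) * (a - b) := by ring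
      _ ≤ (1 + 2 * η) * b * (a - b) := by gcongr
      _ = (1 + 2 * η) * (a - b) * b := by ring

theorem isSlowProfile_comp_log_max {φ : ℝ → ℝ} {η R : ℝ} (hR : 0 < R) (hη : 0 ≤ η)
    (hφ : ∀ r, φ r ∈ Set.Icc (0 : ℝ) 1) (hlip : ∀ r s, |φ r - φ s| ≤ η * |r - s|) :
    IsSlowProfile (1 + 2 * η) R fun r => φ (Real.log (max r R)) where
  mem_Icc _ := hφ _
  abs_sub_mul_le r s := by
    wlog hsr : s ≤ r generalizing r s
    · rw [abs_sub_comm, abs_sub_comm r, add_comm (max r R)]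
      exact this s r (le_of_not_ge hsr)
    have hspos : 0 < max s R := hR.trans_le (le_max_right _ _)
    have hmax : max s R ≤ max r R := max_le_max_right R hsr
    have hlog : 0 ≤ Real.log (max r R) - Real.log (max s R) :=
      sub_nonneg.2 (Real.log_le_log hspos hmax)
    have hone : |φ (Real.log (max r R)) - φ (Real.log (max s R))| ≤ 1 := by
      simpa only [sub_zero] using abs_sub_le_of_le_of_le (hφ _).1 (hφ _).2 (hφ _).1 (hφ _).2
    refine (mul_add_le_of_le_mul_log_sub hspos hmax hη hone ?_).trans ?_
    · simpa only [abs_of_nonneg hlog] using hlip (Real.log (max r R)) (Real.log (max s R))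
    · gcongr
      exact (le_abs_self _).trans (abs_max_sub_max_le_abs r s R)

theorem exists_isSlowProfile_alternating {ρ : ℕ → ℝ} (hρ : Tendsto ρ atTop atTop) {η R : ℝ}
    (hη : 0 < η) (hR : 0 < R) :
    ∃ ψ : ℕ → ℕ, StrictMono ψ ∧ ∃ g, IsSlowProfile (1 + 2 * η) R g ∧
      (∀ j, g (ρ (ψ (2 * j))) = 0) ∧ ∀ j, g (ρ (ψ (2 * j + 1))) = 1 := by
  have hlog : Tendsto (fun j => Real.log (max (ρ j) R)) atTop atTop :=
    Real.tendsto_log_atTop.comp (tendsto_atTop_mono (fun j => le_max_left _ _) hρ)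
  obtain ⟨ψ, hψ, hgap⟩ := exists_strictMono_add_le hlog η⁻¹
  let odds : Set ℝ := Set.range fun j => Real.log (max (ρ (ψ (2 * j + 1))) R)
  let φ := thickenedIndicator (inv_pos.2 hη) odds
  have hlip : ∀ r s, |(φ r : ℝ) - φ s| ≤ η * |r - s| := fun r s => by
    simpa only [NNReal.dist_eq, Real.dist_eq, NNReal.coe_inv,
      Real.coe_toNNReal _ (inv_pos.2 hη).le, inv_inv] using
      (lipschitzWith_thickenedIndicator (inv_pos.2 hη) odds).dist_le_mul r s
  refine ⟨ψ, hψ, _, isSlowProfile_comp_log_max (φ := fun r => φ r) hR hη.le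
    (fun r => ⟨NNReal.coe_nonneg _, thickenedIndicator_le_one _ _ _⟩) hlip, fun j => ?_,
    fun j => ?_⟩
  · refine NNReal.coe_eq_zero.2 (thickenedIndicator_zero _ _ ?_)
    rw [mem_thickening_iff]
    rintro ⟨_, ⟨k, rfl⟩, hdist⟩
    refine hdist.not_ge ?_
    rw [Real.dist_eq]
    rcases lt_or_gt_of_ne (show 2 * j ≠ 2 * k + 1 by omega) with hlt | hgt
    · exact le_abs.2 (Or.inr (by linarith [hgap _ _ hlt]))
    · exact le_abs.2 (Or.inl (by linarith [hgap _ _ hgt]))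
  · exact NNReal.coe_eq_one.2 (thickenedIndicator_one _ _ ⟨j, rfl⟩)

end SlowProfiles

section RadialShift

variable {E : Type*} [NormedAddCommGroup E] [InnerProductSpace ℝ E]

/-- Moves each point along `e`, by an amount that depends only on its norm. For a slow profile `g`
these maps are the nearisometries that test the isometric approximation property. -/
def radialShift (g : ℝ → ℝ) (e x : E) : E := x + g ‖x‖ • e

theorem abs_norm_add_sub_norm_mul_norm_le (h v : E) :
    |‖h + v‖ - ‖h‖| * ‖h‖ ≤ |⟪h, v⟫| + ‖v‖ ^ 2 / 2 := by
  have hlower : ‖h‖ ^ 2 + ⟪h, v⟫ ≤ ‖h + v‖ * ‖h‖ := by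
    rw [← real_inner_self_eq_norm_sq, ← inner_add_right, mul_comm]
    exact real_inner_le_norm h (h + v)
  have hupper : ‖h + v‖ * ‖h‖ ≤ ‖h‖ ^ 2 + ⟪h, v⟫ + ‖v‖ ^ 2 / 2 := by
    nlinarith [norm_add_sq_real h v, sq_nonneg (‖h + v‖ - ‖h‖)]
  rw [← abs_of_nonneg (norm_nonneg h), ← abs_mul, abs_of_nonneg (norm_nonneg h), abs_le]
  constructor <;>
    nlinarith [neg_abs_le ⟪h, v⟫, le_abs_self ⟪h, v⟫, sq_nonneg ‖v‖]

-- The `1 / 4` for each of the two points absorbs the second-order term `Δ ^ 2 / 2` in the change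
-- of their distance.
theorem IsSlowProfile.isNearisometryOn_radialShift {K R t : ℝ} {g : ℝ → ℝ}
    (hg : IsSlowProfile K R g) (hK : 0 ≤ K) (ht : 0 ≤ t) {A : Set E} {e : E} (he : ‖e‖ = 1)
    (hA : ∀ x ∈ A, |⟪x, e⟫| + 1 / 4 ≤ t * max ‖x‖ R) :
    IsNearisometryOn (radialShift g e) A (K * t) := by
  intro x hx y hy
  rcases eq_or_ne x y with rfl | hxy
  · simpa using mul_nonneg hK ht
  let Δ : ℝ := g ‖x‖ - g ‖y‖
  have hshift : radialShift g e x - radialShift g e y = (x - y) + Δ • e := by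
    simp only [radialShift, Δ, sub_smul]
    abel
  have hΔ : |Δ| ≤ 1 := by
    simpa only [sub_zero] using abs_sub_le_of_le_of_le
      (hg.mem_Icc _).1 (hg.mem_Icc _).2 (hg.mem_Icc _).1 (hg.mem_Icc _).2
  have hinner : |⟪x - y, e⟫| + 1 / 2 ≤ t * (max ‖x‖ R + max ‖y‖ R) := by
    rw [inner_sub_left]
    linarith [abs_sub ⟪x, e⟫ ⟪y, e⟫, hA x hx, hA y hy]
  rw [hshift]
  refine le_of_mul_le_mul_right ?_ (norm_sub_pos_iff.2 hxy)
  calc |‖(x - y) + Δ • e‖ - ‖x - y‖| * ‖x - y‖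
      ≤ |⟪x - y, Δ • e⟫| + ‖Δ • e‖ ^ 2 / 2 := abs_norm_add_sub_norm_mul_norm_le _ _
    _ = |Δ| * (|⟪x - y, e⟫| + |Δ| / 2) := by
        rw [real_inner_smul_right, abs_mul, norm_smul, he, Real.norm_eq_abs]
        ring
    _ ≤ |Δ| * (|⟪x - y, e⟫| + 1 / 2) := by gcongr
    _ ≤ |Δ| * (t * (max ‖x‖ R + max ‖y‖ R)) := by gcongr
    _ = t * (|Δ| * (max ‖x‖ R + max ‖y‖ R)) := by ring
    _ ≤ t * (K * |‖x‖ - ‖y‖|) := mul_le_mul_of_nonneg_left (hg.abs_sub_mul_le _ _) ht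
    _ ≤ t * (K * ‖x - y‖) := by gcongr t * (K * ?_); exact abs_norm_sub_norm_le x y
    _ = K * t * ‖x - y‖ := by ring

end RadialShift

section Isometries

variable {E : Type*} [NormedAddCommGroup E] [InnerProductSpace ℝ E]

/-- The vectors `w` for which the functional `⟪w, ·⟫` is bounded on `A`. -/
def boundedFunctionals (A : Set E) : Submodule ℝ E where
  carrier := {w | ∃ C : ℝ, ∀ x ∈ A, |⟪w, x⟫| ≤ C}
  zero_mem' := ⟨0, fun x _ => by simp⟩
  add_mem' := by
    rintro v w ⟨C, hC⟩ ⟨D, hD⟩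
    refine ⟨C + D, fun x hx => ?_⟩
    rw [inner_add_left]
    exact (abs_add_le _ _).trans (add_le_add (hC x hx) (hD x hx))
  smul_mem' := by
    rintro a w ⟨C, hC⟩
    refine ⟨|a| * C, fun x hx => ?_⟩
    rw [real_inner_smul_left, abs_mul]
    exact mul_le_mul_of_nonneg_left (hC x hx) (abs_nonneg a)

theorem exists_tendsto_inner_subseq [FiniteDimensional ℝ E] {A : Set E} {x : ℕ → E}
    (hxA : ∀ j, x j ∈ A) :
    ∃ ψ : ℕ → ℕ, StrictMono ψ ∧
      ∀ w ∈ boundedFunctionals A, ∃ l : ℝ, Tendsto (fun j => ⟪w, x (ψ j)⟫) atTop (nhds l) := by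
  let ev (j : ℕ) : boundedFunctionals A →L[ℝ] ℝ :=
    (innerSL ℝ (x j)).comp (boundedFunctionals A).subtypeL
  have hev (w : boundedFunctionals A) (j : ℕ) : ev j w = ⟪(w : E), x j⟫ := real_inner_comm _ _
  have hpointwise : ∀ w, ∃ C, ∀ j, ‖ev j w‖ ≤ C := fun w => by
    obtain ⟨C, hC⟩ := w.2
    refine ⟨C, fun j => ?_⟩
    rw [hev]
    exact hC _ (hxA j)
  obtain ⟨M, hM⟩ := banach_steinhaus hpointwise
  have : ProperSpace (boundedFunctionals A →L[ℝ] ℝ) :=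
    FiniteDimensional.proper ℝ (boundedFunctionals A →L[ℝ] ℝ)
  obtain ⟨p, -, ψ, hψ, hp⟩ := tendsto_subseq_of_bounded isBounded_closedBall
    fun j => mem_closedBall_zero_iff.2 (hM j)
  refine ⟨ψ, hψ, fun w hw => ⟨p ⟨w, hw⟩, ?_⟩⟩
  have heval := (ContinuousLinearMap.apply ℝ ℝ (⟨w, hw⟩ : boundedFunctionals A)).continuous
  exact ((heval.tendsto p).comp hp).congr fun j => hev ⟨w, hw⟩ (ψ j)

theorem exists_inner_isometry_sub_eq [CompleteSpace E] {T : E → E} (hT : Isometry T) (e : E) :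
    ∃ (w : E) (b : ℝ), ∀ x, ⟪e, T x - x⟫ = ⟪w, x⟫ + b := by
  let L := hT.affineIsometryOfStrictConvexSpace.linearIsometry
  have hTL : ∀ x, T x = L x + T 0 := fun x => by
    simpa using hT.affineIsometryOfStrictConvexSpace.map_vadd 0 x
  refine ⟨ContinuousLinearMap.adjoint L.toContinuousLinearMap e - e, ⟪e, T 0⟫, fun x => ?_⟩
  rw [hTL x, inner_sub_left, ContinuousLinearMap.adjoint_inner_left,
    LinearIsometry.coe_toContinuousLinearMap, inner_sub_right, inner_add_right]
  ring

theorem one_le_two_mul_of_isometry_near_radialShift [CompleteSpace E] {A : Set E} {e : E}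
    (he : ‖e‖ = 1) {g : ℝ → ℝ} (hg : ∀ r, g r ∈ Set.Icc (0 : ℝ) 1) {x : ℕ → E}
    (hxA : ∀ j, x j ∈ A)
    (hx : ∀ w ∈ boundedFunctionals A, ∃ l : ℝ, Tendsto (fun j => ⟪w, x j⟫) atTop (nhds l))
    (hzero : ∀ j, g ‖x (2 * j)‖ = 0) (hone : ∀ j, g ‖x (2 * j + 1)‖ = 1)
    {T : E → E} (hT : Isometry T) {δ : ℝ} (hTg : ∀ y ∈ A, ‖T y - radialShift g e y‖ ≤ δ) :
    1 ≤ 2 * δ := by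
  obtain ⟨w, b, hwb⟩ := exists_inner_isometry_sub_eq hT e
  have hnear : ∀ y ∈ A, |⟪w, y⟫ + b - g ‖y‖| ≤ δ := fun y hy => by
    have hinner : ⟪e, T y - radialShift g e y⟫ = ⟪w, y⟫ + b - g ‖y‖ := by
      rw [radialShift, ← sub_sub, inner_sub_right, hwb, real_inner_smul_right,
        real_inner_self_eq_norm_sq, he]
      ring
    rw [← hinner]
    refine (abs_real_inner_le_norm _ _).trans ?_
    rw [he, one_mul]
    exact hTg y hy
  have hw : w ∈ boundedFunctionals A := by
    refine ⟨δ + |b| + 1, fun y hy => abs_le.2 ?_⟩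
    have hy := abs_le.1 (hnear y hy)
    constructor <;> linarith [hy.1, hy.2, (hg ‖y‖).1, (hg ‖y‖).2, neg_abs_le b, le_abs_self b]
  obtain ⟨l, hl⟩ := hx w hw
  have heven : StrictMono fun j : ℕ => 2 * j := fun i j hij => by lia
  have hodd : StrictMono fun j : ℕ => 2 * j + 1 := heven.add_const 1
  have hdiff : Tendsto (fun j => ⟪w, x (2 * j + 1)⟫ - ⟪w, x (2 * j)⟫) atTop (nhds (l - l)) :=
    (hl.comp hodd.tendsto_atTop).sub (hl.comp heven.tendsto_atTop)
  have hgap : ∀ j, 1 - 2 * δ ≤ ⟪w, x (2 * j + 1)⟫ - ⟪w, x (2 * j)⟫ := fun j => by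
    have hj₀ := (abs_le.1 (hnear _ (hxA (2 * j)))).2
    have hj₁ := (abs_le.1 (hnear _ (hxA (2 * j + 1)))).1
    rw [hzero] at hj₀
    rw [hone] at hj₁
    linarith
  linarith [ge_of_tendsto' hdiff hgap]

end Isometries

section UnboundedSets

theorem exists_seq_mem_tendsto_norm_atTop {E : Type*} [SeminormedAddCommGroup E]
    {A : Set E} (hA : ¬ IsBounded A) :
    ∃ x : ℕ → E, (∀ j, x j ∈ A) ∧ Tendsto (fun j => ‖x j‖) atTop atTop := by
  have hfar : ∀ k : ℕ, ∃ x ∈ A, (k : ℝ) ≤ ‖x‖ := fun k => by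
    by_contra! hlt
    exact hA (isBounded_iff_forall_norm_le.2 ⟨k, fun x hx => (hlt x hx).le⟩)
  choose x hxA hx using hfar
  exact ⟨x, hxA, tendsto_atTop_mono hx tendsto_natCast_atTop_atTop⟩

theorem exists_norm_eq_one_of_not_isBounded {E : Type*} [NormedAddCommGroup E] [NormedSpace ℝ E]
    {A : Set E} (hA : ¬ IsBounded A) : ∃ e : E, ‖e‖ = 1 := by
  by_contra! hne
  have hsub : A ⊆ {0} := fun x _ => by
    by_contra hx
    exact hne _ (NormedSpace.norm_normalize hx)
  exact hA (isBounded_singleton.subset hsub)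

variable {n : ℕ} {A : Set (EuclideanSpace ℝ (Fin n))} {c : ℝ}

theorem HasIAP.one_le_two_mul_mul_of_clusterWidth_lt (hIAP : HasIAP c A) (hA : ¬ IsBounded A)
    {e : EuclideanSpace ℝ (Fin n)} (he : ‖e‖ = 1) {ε : ℝ} (hε : clusterWidth A e < ε) :
    1 ≤ 2 * (c * ε) := by
  obtain ⟨t, hwt, htε⟩ := exists_between hε
  have ht : 0 < t := (clusterWidth_nonneg A e).trans_lt hwt
  obtain ⟨η, hη, rfl⟩ : ∃ η > 0, (1 + 2 * η) * t = ε :=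
    ⟨(ε / t - 1) / 2, half_pos (sub_pos.2 ((one_lt_div ht).2 htε)), by field_simp; ring⟩
  obtain ⟨R, hR, hAR⟩ := exists_abs_inner_add_le_mul_max_of_clusterWidth_lt hwt (1 / 4)
  obtain ⟨x, hxA, hx⟩ := exists_seq_mem_tendsto_norm_atTop hA
  obtain ⟨ψ, hψ, hconv⟩ := exists_tendsto_inner_subseq hxA
  obtain ⟨χ, hχ, g, hg, hzero, hone⟩ :=
    exists_isSlowProfile_alternating (hx.comp hψ.tendsto_atTop) hη hR
  obtain ⟨T, hT, hTg⟩ := hIAP _ (by positivity) (radialShift g e)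
    (hg.isNearisometryOn_radialShift (by positivity) ht.le he hAR)
  refine one_le_two_mul_of_isometry_near_radialShift (x := x ∘ ψ ∘ χ) he hg.mem_Icc
    (fun j => hxA _) (fun w hw => ?_) hzero hone hT hTg
  exact (hconv w hw).imp fun l hl => hl.comp hχ.tendsto_atTop

theorem HasIAP.one_div_two_mul_le_clusterWidth (hIAP : HasIAP c A) (hA : ¬ IsBounded A)
    (hc : 0 < c) {e : EuclideanSpace ℝ (Fin n)} (he : ‖e‖ = 1) :
    1 / (2 * c) ≤ clusterWidth A e := by
  refine le_of_forall_gt_imp_ge_of_dense fun ε hε => ?_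
  rw [div_le_iff₀ (by positivity)]
  linarith [hIAP.one_le_two_mul_mul_of_clusterWidth_lt hA he hε]

end UnboundedSets

theorem iap_implies_mu_general {n : ℕ} (A : Set (EuclideanSpace ℝ (Fin n)))
    (hA : ¬ IsBounded A) (c : ℝ) (hc : 0 < c) (hIAP : HasIAP c A) :
    1 / (2 * c) ≤ muDir A := by
  obtain ⟨e₀, he₀⟩ := exists_norm_eq_one_of_not_isBounded hA
  refine le_csInf ⟨_, e₀, he₀, rfl⟩ ?_
  rintro _ ⟨e, he, rfl⟩
  exact hIAP.one_div_two_mul_le_clusterWidth hA hc he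

/-- If an unbounded set `A ⊆ ℝⁿ` has the `c`-IAP, then `μ(A) ≥ 1/(17c)`. -/
theorem iap_implies_mu {n : ℕ} (hn : 1 ≤ n) (A : Set (EuclideanSpace ℝ (Fin n)))
    (hA : ¬ IsBounded A) (c : ℝ) (hc : 0 < c) (hIAP : HasIAP c A) :
    1 / (17 * c) ≤ muDir A := by
  calc 1 / (17 * c) ≤ 1 / (2 * c) := by gcongr; norm_num
    _ ≤ muDir A := iap_implies_mu_general A hA c hc hIAP
end

section
/- Let n ≥ 1, let c′ > 0, and let A ⊆ ℝⁿ be an unbounded set with μ(A) ≥ 1/c′. Then A has the (√2·c′)-isometric approximation property: for every ε ≥ 0 and every ε-nearisometry f : A → ℝⁿ there is an isometry T : ℝⁿ → ℝⁿ with |T x − f x| ≤ √2·c′·ε for all x ∈ A. -/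
open Filter Metric Bornology RealInnerProductSpace

/-!
A nearisometry `f` relates cluster directions `u` of `A` to limits `w` of `‖x j‖⁻¹ • f (x j)`. Since
`‖x j - a‖ - ‖x j - b‖` tends to `⟪b - a, u⟫` as `x j` escapes to infinity in the direction `u`, the
nearisometry inequality passes to the limit: `|⟪f y - f y', w⟫ - ⟪y - y', u⟫| ≤ 2 * ε` for
`y, y' ∈ A`. Letting `y` itself escape shows that `u ↦ w` preserves inner products, so it extends to
a linear isometry `U`, because the cluster directions span when `0 < μ(A)`. The bound then says that
the differences of the values of `f - U` on `A` have components at most `2 * ε` along the images of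
all cluster directions, hence norm at most `2 * c' * ε`. By Jung's inequality these values lie in a
ball of radius `√2 * c' * ε`, and translating `U` by its center yields the required isometry.
-/

open Topology Module

section Jung

lemma exists_minimal_closedBall_superset {X : Type*} [PseudoMetricSpace X] [ProperSpace X]
    {S : Set X} (hS : IsBounded S) (hne : S.Nonempty) :
    ∃ c R, S ⊆ closedBall c R ∧ ∀ c' R', S ⊆ closedBall c' R' → R ≤ R' := by
  obtain ⟨a, ha⟩ := hne
  obtain ⟨r, hr, hSr⟩ := hS.subset_closedBall_lt 0 a
  let K : Set (X × ℝ) := {q | S ⊆ closedBall q.1 q.2} ∩ closedBall a r ×ˢ Set.Icc 0 r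
  have hclosed : IsClosed {q : X × ℝ | S ⊆ closedBall q.1 q.2} := by
    have hinter : {q : X × ℝ | S ⊆ closedBall q.1 q.2} =
        ⋂ x ∈ S, {q : X × ℝ | dist x q.1 ≤ q.2} := by
      ext; simp [Set.subset_def]
    rw [hinter]
    exact isClosed_biInter fun x _ => isClosed_le (by fun_prop) (by fun_prop)
  have hK : IsCompact K := ((isCompact_closedBall a r).prod isCompact_Icc).inter_left hclosed
  have hmem : (a, r) ∈ K := ⟨hSr, mem_closedBall_self hr.le, hr.le, le_rfl⟩
  obtain ⟨⟨c, R⟩, hcR, hmin⟩ := hK.exists_isMinOn ⟨_, hmem⟩ continuous_snd.continuousOn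
  refine ⟨c, R, hcR.1, fun c' R' hS' => ?_⟩
  rcases le_total r R' with hle | hle
  · exact (hmin hmem).trans hle
  · have hac : dist a c' ≤ R' := hS' ha
    exact hmin (show (c', R') ∈ K from
      ⟨hS', by rw [mem_closedBall']; exact hac.trans hle, dist_nonneg.trans hac, hle⟩)

variable {V P : Type*} [NormedAddCommGroup V] [InnerProductSpace ℝ V] [MetricSpace P]
  [NormedAddTorsor V P]

lemma dist_lineMap_sq (x c s : P) (t : ℝ) :
    dist x (AffineMap.lineMap c s t) ^ 2 =
      (1 - t) * dist x c ^ 2 + t * dist x s ^ 2 - t * (1 - t) * dist s c ^ 2 := by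
  have hline : x -ᵥ AffineMap.lineMap c s t = (x -ᵥ c) - t • (s -ᵥ c) := by
    rw [AffineMap.lineMap_apply, vsub_vadd_eq_vsub_sub]
  have hxs : x -ᵥ s = (x -ᵥ c) - (s -ᵥ c) := (vsub_sub_vsub_cancel_right x s c).symm
  simp only [dist_eq_norm_vsub V]
  rw [hline, hxs, norm_sub_sq_real, norm_sub_sq_real (x -ᵥ c), inner_smul_right, norm_smul,
    mul_pow, Real.norm_eq_abs, sq_abs]
  ring

include V in
lemma sq_add_dist_sq_le_of_minimal_closedBall {S : Set P} {c : P} {R d : ℝ}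
    (hSR : S ⊆ closedBall c R) (hmin : ∀ c' R', S ⊆ closedBall c' R' → R ≤ R')
    (hd : ∀ x ∈ S, ∀ y ∈ S, dist x y ≤ d) {s : P} (hs : s ∈ S) :
    R ^ 2 + dist s c ^ 2 ≤ d ^ 2 := by
  have hR : 0 ≤ R := dist_nonneg.trans (hSR hs)
  -- Moving the center from `c` towards `s` by a fraction `t` cannot shrink the enclosing ball.
  have hstep : ∀ t ∈ Set.Ioo (0 : ℝ) 1, R ^ 2 + (1 - t) * dist s c ^ 2 ≤ d ^ 2 := by
    rintro t ⟨ht0, ht1⟩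
    have : 0 ≤ 1 - t := sub_nonneg.2 ht1.le
    set B := (1 - t) * R ^ 2 + t * d ^ 2 - t * (1 - t) * dist s c ^ 2
    have hdist : ∀ x ∈ S, dist x (AffineMap.lineMap c s t) ^ 2 ≤ B := fun x hx => by
      have hxc : dist x c ≤ R := hSR hx
      have hxs : dist x s ≤ d := hd x hx s hs
      rw [dist_lineMap_sq]
      unfold B
      gcongr
    have hRB : R ^ 2 ≤ B := (Real.le_sqrt hR ((sq_nonneg _).trans (hdist s hs))).1 <|
      hmin (AffineMap.lineMap c s t) _ fun x hx => Real.le_sqrt_of_sq_le (hdist x hx)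
    refine le_of_mul_le_mul_left ?_ ht0
    linarith
  have hlim : Tendsto (fun t : ℝ => R ^ 2 + (1 - t) * dist s c ^ 2) (𝓝[>] 0)
      (𝓝 (R ^ 2 + (1 - 0) * dist s c ^ 2)) :=
    (Continuous.tendsto (by fun_prop) 0).mono_left nhdsWithin_le_nhds
  rw [sub_zero, one_mul] at hlim
  exact le_of_tendsto hlim (eventually_of_mem (Ioo_mem_nhdsGT one_pos) hstep)

include V in
/-- Jung's theorem gives the radius `d * √(n / (2 * (n + 1)))` in dimension `n`; this is its
dimension-free form. -/
lemma exists_subset_closedBall_div_sqrt_two [ProperSpace P] {S : Set P} {d : ℝ}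
    (hd : ∀ x ∈ S, ∀ y ∈ S, dist x y ≤ d) : ∃ c, S ⊆ closedBall c (d / √2) := by
  rcases S.eq_empty_or_nonempty with rfl | hne
  · exact ⟨Classical.arbitrary P, Set.empty_subset _⟩
  obtain ⟨c, R, hSR, hmin⟩ :=
    exists_minimal_closedBall_superset (isBounded_iff.2 ⟨d, fun x hx y hy => hd x hx y hy⟩) hne
  refine ⟨c, fun s hs => ?_⟩
  have hd0 : 0 ≤ d := dist_nonneg.trans (hd s hs s hs)
  have hsR : dist s c ≤ R := hSR hs
  have hsq : 2 * dist s c ^ 2 ≤ d ^ 2 := calc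
    2 * dist s c ^ 2 = dist s c ^ 2 + dist s c ^ 2 := two_mul _
    _ ≤ R ^ 2 + dist s c ^ 2 := by gcongr
    _ ≤ d ^ 2 := sq_add_dist_sq_le_of_minimal_closedBall (V := V) hSR hmin hd hs
  rw [mem_closedBall, le_div_iff₀ (by positivity)]
  refine le_of_sq_le_sq ?_ hd0
  rwa [mul_pow, Real.sq_sqrt zero_le_two, mul_comm]

end Jung

section IsometryExtension

variable {𝕜 E F ι : Type*} [RCLike 𝕜] [NormedAddCommGroup E] [InnerProductSpace 𝕜 E]
  [NormedAddCommGroup F] [InnerProductSpace 𝕜 F] {v : ι → E} {w : ι → F}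

lemma norm_linearCombination_eq_of_inner_eq (h : ∀ i j, inner 𝕜 (w i) (w j) = inner 𝕜 (v i) (v j))
    (a : ι →₀ 𝕜) :
    ‖Finsupp.linearCombination 𝕜 w a‖ = ‖Finsupp.linearCombination 𝕜 v a‖ := by
  simp only [@norm_eq_sqrt_re_inner 𝕜, Finsupp.linearCombination_apply, Finsupp.sum, sum_inner,
    inner_sum, inner_smul_left, inner_smul_right, h]

lemma exists_linearIsometry_of_inner_eq (hspan : Submodule.span 𝕜 (Set.range v) = ⊤)
    (h : ∀ i j, inner 𝕜 (w i) (w j) = inner 𝕜 (v i) (v j)) :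
    ∃ U : E →ₗᵢ[𝕜] F, ∀ i, U (v i) = w i := by
  have hnorm := norm_linearCombination_eq_of_inner_eq h
  obtain ⟨g, hg⟩ := (Finsupp.linearCombination 𝕜 v).exists_rightInverse_of_surjective
    (by rw [Finsupp.range_linearCombination, hspan])
  have hvg : ∀ x, Finsupp.linearCombination 𝕜 v (g x) = x := LinearMap.congr_fun hg
  refine ⟨⟨Finsupp.linearCombination 𝕜 w ∘ₗ g, fun x => ?_⟩, fun i => ?_⟩
  · rw [LinearMap.comp_apply, hnorm, hvg]
  · -- `g (v i)` and `single i 1` have the same image under `linearCombination v`.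
    have hdiff : Finsupp.linearCombination 𝕜 w (g (v i) - Finsupp.single i 1) = 0 := by
      rw [← norm_eq_zero, hnorm, map_sub, hvg, Finsupp.linearCombination_single, one_smul, sub_self,
        norm_zero]
    rwa [map_sub, Finsupp.linearCombination_single, one_smul, sub_eq_zero] at hdiff

end IsometryExtension

section ScaledLimits

variable {ι E : Type*} {l : Filter ι} {r : ι → ℝ}

lemma tendsto_inv_smul_of_norm_le [NormedAddCommGroup E] [NormedSpace ℝ E] {b : ι → E} {C : ℝ}
    (hr : Tendsto r l atTop) (hb : ∀ i, ‖b i‖ ≤ C) :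
    Tendsto (fun i => (r i)⁻¹ • b i) l (𝓝 0) :=
  (tendsto_inv_atTop_zero.comp hr).zero_smul_isBoundedUnder_le (isBoundedUnder_of ⟨C, hb⟩)

lemma tendsto_inv_smul_sub_const [NormedAddCommGroup E] [NormedSpace ℝ E] {z : ι → E} {w : E}
    (hr : Tendsto r l atTop) (hz : Tendsto (fun i => (r i)⁻¹ • z i) l (𝓝 w)) (a : E) :
    Tendsto (fun i => (r i)⁻¹ • (z i - a)) l (𝓝 w) := by
  simpa only [smul_sub, sub_zero] using
    hz.sub (tendsto_inv_smul_of_norm_le (b := fun _ => a) hr fun _ => le_rfl)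

variable [NormedAddCommGroup E] [InnerProductSpace ℝ E]

lemma norm_sub_norm_eq_inner_div (p q : E) : ‖p‖ - ‖q‖ = ⟪p - q, p + q⟫ / (‖p‖ + ‖q‖) := by
  have hinner : ⟪p - q, p + q⟫ = (‖p‖ - ‖q‖) * (‖p‖ + ‖q‖) := by
    rw [inner_sub_left, inner_add_right, inner_add_right, real_inner_comm q p,
      real_inner_self_eq_norm_sq, real_inner_self_eq_norm_sq]
    ring
  rcases (add_nonneg (norm_nonneg p) (norm_nonneg q)).eq_or_lt' with h0 | hpos
  · rw [h0, div_zero]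
    linarith [norm_nonneg p, norm_nonneg q]
  · rw [hinner, mul_div_cancel_right₀ _ hpos.ne']

/-- The limit is the Busemann function of the direction `w`. -/
lemma tendsto_norm_sub_sub_norm_sub {z : ι → E} {w : E} (hr : Tendsto r l atTop)
    (hz : Tendsto (fun i => (r i)⁻¹ • z i) l (𝓝 w)) (hw : ‖w‖ = 1) (a b : E) :
    Tendsto (fun i => ‖z i - a‖ - ‖z i - b‖) l (𝓝 ⟪b - a, w⟫) := by
  have ha := tendsto_inv_smul_sub_const hr hz a
  have hb := tendsto_inv_smul_sub_const hr hz b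
  have hquot := ((tendsto_const_nhds (x := b - a)).inner (𝕜 := ℝ) (ha.add hb)).div
    (ha.norm.add hb.norm) (by rw [hw]; norm_num)
  have hlimit : ⟪b - a, w + w⟫ / (‖w‖ + ‖w‖) = ⟪b - a, w⟫ := by
    rw [hw, inner_add_right]
    ring
  rw [hlimit] at hquot
  refine hquot.congr' ?_
  filter_upwards [hr.eventually_gt_atTop 0] with i hri
  have hri' : 0 < (r i)⁻¹ := inv_pos.2 hri
  rw [Pi.div_apply, norm_sub_norm_eq_inner_div, sub_sub_sub_cancel_left, ← smul_add,
    inner_smul_right, norm_smul, norm_smul, ← mul_add, Real.norm_of_nonneg hri'.le,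
    mul_div_mul_left _ _ hri'.ne']

end ScaledLimits

section ClusterDirections

variable {E : Type*} [NormedAddCommGroup E] {A : Set E}

lemma IsClusterDirection.norm_eq_one [NormedSpace ℝ E] {u : E} (hu : IsClusterDirection A u) :
    ‖u‖ = 1 := by
  obtain ⟨x, -, hx, hxu⟩ := hu
  refine tendsto_nhds_unique hxu.norm (tendsto_const_nhds.congr' ?_)
  filter_upwards [hx.eventually_gt_atTop 0] with j hj
  rw [norm_smul, norm_inv, norm_norm, inv_mul_cancel₀ hj.ne']

variable [InnerProductSpace ℝ E]

lemma muDir_mul_norm_le {w : E} {K : ℝ} (hK : 0 ≤ K)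
    (hw : ∀ u, IsClusterDirection A u → |⟪u, w⟫| ≤ K) : muDir A * ‖w‖ ≤ K := by
  rcases eq_or_ne w 0 with rfl | hne
  · rwa [norm_zero, mul_zero]
  have hpos : 0 < ‖w‖ := norm_pos_iff.2 hne
  rw [← le_div_iff₀ hpos]
  let e := ‖w‖⁻¹ • w
  calc muDir A ≤ sSup {t | ∃ u, IsClusterDirection A u ∧ t = |⟪u, e⟫|} := by
        refine csInf_le ⟨0, ?_⟩ ⟨e, ?_, rfl⟩
        · rintro s ⟨e', -, rfl⟩
          exact Real.sSup_nonneg fun t ⟨u, _, ht⟩ => ht ▸ abs_nonneg _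
        · rw [norm_smul, norm_inv, norm_norm, inv_mul_cancel₀ hpos.ne']
    _ ≤ K / ‖w‖ := by
        refine Real.sSup_le ?_ (by positivity)
        rintro t ⟨u, hu, rfl⟩
        rw [inner_smul_right, abs_mul, abs_of_pos (inv_pos.2 hpos), div_eq_inv_mul]
        gcongr
        exact hw u hu

lemma span_clusterDirections_eq_top [FiniteDimensional ℝ E] (hA : 0 < muDir A) :
    Submodule.span ℝ {u | IsClusterDirection A u} = ⊤ := by
  rw [← Submodule.orthogonal_eq_bot_iff, Submodule.eq_bot_iff]
  intro w hw
  have hmul : muDir A * ‖w‖ ≤ 0 := muDir_mul_norm_le le_rfl fun u hu => by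
    rw [(Submodule.mem_orthogonal _ w).1 hw u (Submodule.subset_span hu), abs_zero]
  exact norm_le_zero_iff.1 (nonpos_of_mul_nonpos_right hmul hA)

end ClusterDirections

section AsymptoticImages

/-- `w` is an asymptotic image under `f` of the cluster direction `u` of `A`: some sequence in `A`
escapes to infinity in the direction `u` while its images, scaled by the norms of the original
points, tend to `w`. It is a relation because `w` need not be unique for a general `f`. -/
def IsAsymptoticImage {E F : Type*} [NormedAddCommGroup E] [NormedSpace ℝ E]
    [NormedAddCommGroup F] [NormedSpace ℝ F] (f : E → F) (A : Set E) (u : E) (w : F) : Prop :=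
  ∃ x : ℕ → E, (∀ j, x j ∈ A) ∧ Tendsto (fun j => ‖x j‖) atTop atTop ∧
    Tendsto (fun j => ‖x j‖⁻¹ • x j) atTop (𝓝 u) ∧
    Tendsto (fun j => ‖x j‖⁻¹ • f (x j)) atTop (𝓝 w)

variable {E F : Type*} [NormedAddCommGroup E] [NormedAddCommGroup F] {f : E → F} {A : Set E}
  {ε : ℝ}

lemma IsNearisometryOn.nonneg (hf : IsNearisometryOn f A ε) {x : E} (hx : x ∈ A) : 0 ≤ ε :=
  (abs_nonneg _).trans (hf x hx x hx)

lemma IsNearisometryOn.tendsto_inv_norm_mul_norm_image {ι : Type*} {l : Filter ι} {x : ι → E}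
    {a : E} (hf : IsNearisometryOn f A ε) (ha : a ∈ A) (hxA : ∀ i, x i ∈ A)
    (hx : Tendsto (fun i => ‖x i‖) l atTop) :
    Tendsto (fun i => ‖x i‖⁻¹ * ‖f (x i)‖) l (𝓝 1) := by
  have hbound : ∀ i, ‖‖f (x i)‖ - ‖x i‖‖ ≤ ‖f a‖ + ε + ‖a‖ := fun i => calc
    |‖f (x i)‖ - ‖x i‖| ≤ |‖f (x i)‖ - ‖f (x i) - f a‖| + |‖f (x i) - f a‖ - ‖x i - a‖|
          + |‖x i - a‖ - ‖x i‖| := by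
        refine (abs_sub_le _ ‖x i - a‖ _).trans ?_
        gcongr
        exact abs_sub_le _ _ _
    _ ≤ ‖f a‖ + ε + ‖a‖ := by
        gcongr
        · simpa using abs_norm_sub_norm_le (f (x i)) (f (x i) - f a)
        · exact hf _ (hxA i) a ha
        · simpa using abs_norm_sub_norm_le (x i - a) (x i)
  have hlim := (tendsto_inv_smul_of_norm_le hx hbound).add_const 1
  rw [zero_add] at hlim
  refine hlim.congr' ?_
  filter_upwards [hx.eventually_gt_atTop 0] with i hi
  rw [smul_eq_mul, mul_sub, inv_mul_cancel₀ hi.ne', sub_add_cancel]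

section NormedSpace

variable [NormedSpace ℝ E] [NormedSpace ℝ F] {u : E} {w : F}

lemma IsAsymptoticImage.isClusterDirection (h : IsAsymptoticImage f A u w) :
    IsClusterDirection A u :=
  let ⟨x, hxA, hx, hxu, _⟩ := h
  ⟨x, hxA, hx, hxu⟩

lemma IsAsymptoticImage.norm_eq_one (hf : IsNearisometryOn f A ε)
    (h : IsAsymptoticImage f A u w) : ‖w‖ = 1 := by
  obtain ⟨x, hxA, hx, -, hxw⟩ := h
  refine tendsto_nhds_unique hxw.norm ?_
  simpa only [norm_smul, norm_inv, norm_norm] using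
    hf.tendsto_inv_norm_mul_norm_image (hxA 0) hxA hx

lemma IsClusterDirection.exists_isAsymptoticImage [ProperSpace F] (hf : IsNearisometryOn f A ε)
    (hu : IsClusterDirection A u) : ∃ w, IsAsymptoticImage f A u w := by
  obtain ⟨x, hxA, hx, hxu⟩ := hu
  obtain ⟨C, hC⟩ := (hf.tendsto_inv_norm_mul_norm_image (hxA 0) hxA hx).bddAbove_range
  have hmem : ∀ j, ‖x j‖⁻¹ • f (x j) ∈ closedBall (0 : F) C := fun j => by
    rw [mem_closedBall_zero_iff, norm_smul, norm_inv, norm_norm]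
    exact hC ⟨j, rfl⟩
  obtain ⟨w, -, ψ, hψ, hw⟩ := tendsto_subseq_of_bounded isBounded_closedBall hmem
  have hψ' := hψ.tendsto_atTop
  exact ⟨w, x ∘ ψ, fun j => hxA _, hx.comp hψ', hxu.comp hψ', hw⟩

end NormedSpace

variable [InnerProductSpace ℝ E] [InnerProductSpace ℝ F]

lemma IsAsymptoticImage.abs_inner_sub_inner_le {u : E} {w : F} (h : IsAsymptoticImage f A u w)
    (hf : IsNearisometryOn f A ε) {y y' : E} (hy : y ∈ A) (hy' : y' ∈ A) :
    |⟪f y - f y', w⟫ - ⟪y - y', u⟫| ≤ 2 * ε := by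
  have hw := h.norm_eq_one hf
  have hu := h.isClusterDirection.norm_eq_one
  obtain ⟨x, hxA, hx, hxu, hxw⟩ := h
  have hlim := ((tendsto_norm_sub_sub_norm_sub hx hxw hw (f y') (f y)).sub
    (tendsto_norm_sub_sub_norm_sub hx hxu hu y' y)).abs
  refine le_of_tendsto' hlim fun j => ?_
  rw [sub_sub_sub_comm, two_mul]
  exact (abs_sub _ _).trans (add_le_add (hf _ (hxA j) _ hy') (hf _ (hxA j) _ hy))

lemma IsAsymptoticImage.inner_eq {u v : E} {w z : F} (hu : IsAsymptoticImage f A u w)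
    (hv : IsAsymptoticImage f A v z) (hf : IsNearisometryOn f A ε) : ⟪w, z⟫ = ⟪u, v⟫ := by
  obtain ⟨x, hxA, hx, hxu, hxw⟩ := hu
  have hinner := ((tendsto_inv_smul_sub_const hx hxw (f (x 0))).inner (𝕜 := ℝ)
    (tendsto_const_nhds (x := z))).sub ((tendsto_inv_smul_sub_const hx hxu (x 0)).inner (𝕜 := ℝ)
    (tendsto_const_nhds (x := v)))
  simp only [real_inner_smul_left, ← mul_sub] at hinner
  exact sub_eq_zero.1 <| tendsto_nhds_unique hinner <| tendsto_inv_smul_of_norm_le hx fun j =>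
    hv.abs_inner_sub_inner_le hf (hxA j) (hxA 0)

lemma IsNearisometryOn.muDir_mul_dist_sub_le (hf : IsNearisometryOn f A ε) {U : E ≃ₗᵢ[ℝ] F}
    (hU : ∀ u, IsClusterDirection A u → IsAsymptoticImage f A u (U u)) {y y' : E} (hy : y ∈ A)
    (hy' : y' ∈ A) : muDir A * dist (f y - U y) (f y' - U y') ≤ 2 * ε := by
  have hdiff : f y - U y - (f y' - U y') = f y - f y' - U (y - y') := by
    rw [map_sub, sub_sub_sub_comm]
  rw [dist_eq_norm, hdiff, ← U.symm.norm_map]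
  refine muDir_mul_norm_le (mul_nonneg zero_le_two (hf.nonneg hy)) fun u hu => ?_
  rw [← U.inner_map_eq_flip, inner_sub_right, U.inner_map_map, real_inner_comm,
    real_inner_comm (y - y')]
  exact (hU u hu).abs_inner_sub_inner_le hf hy hy'

variable [FiniteDimensional ℝ E] [FiniteDimensional ℝ F]

lemma IsNearisometryOn.exists_linearIsometryEquiv (hf : IsNearisometryOn f A ε)
    (hEF : finrank ℝ E = finrank ℝ F) (hA : 0 < muDir A) :
    ∃ U : E ≃ₗᵢ[ℝ] F, ∀ u, IsClusterDirection A u → IsAsymptoticImage f A u (U u) := by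
  let v : {q : E × F // IsAsymptoticImage f A q.1 q.2} → E := fun q => q.1.1
  have hspan : Submodule.span ℝ (Set.range v) = ⊤ := by
    rw [eq_top_iff, ← span_clusterDirections_eq_top hA]
    refine Submodule.span_mono fun u hu => ?_
    obtain ⟨w, hw⟩ := hu.exists_isAsymptoticImage hf
    exact ⟨⟨(u, w), hw⟩, rfl⟩
  obtain ⟨U, hU⟩ := exists_linearIsometry_of_inner_eq (w := fun q => q.1.2) hspan
    fun p q => p.2.inner_eq q.2 hf
  refine ⟨U.toLinearIsometryEquiv hEF, fun u hu => ?_⟩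
  obtain ⟨w, hw⟩ := hu.exists_isAsymptoticImage hf
  rwa [LinearIsometry.toLinearIsometryEquiv_apply, show U u = w from hU ⟨(u, w), hw⟩]

theorem mu_implies_iap_general (hEF : finrank ℝ E = finrank ℝ F) {c' : ℝ} (hc' : 0 < c')
    (hmu : 1 / c' ≤ muDir A) (hf : IsNearisometryOn f A ε) :
    ∃ T : E ≃ᵃⁱ[ℝ] F, ∀ x ∈ A, ‖T x - f x‖ ≤ √2 * c' * ε := by
  obtain ⟨U, hU⟩ := hf.exists_linearIsometryEquiv hEF ((one_div_pos.2 hc').trans_le hmu)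
  have hdist : ∀ a ∈ (fun y => f y - U y) '' A, ∀ b ∈ (fun y => f y - U y) '' A,
      dist a b ≤ c' * (2 * ε) := by
    rintro _ ⟨y, hy, rfl⟩ _ ⟨y', hy', rfl⟩
    rw [← div_le_iff₀' hc', div_eq_inv_mul, ← one_div]
    exact (mul_le_mul_of_nonneg_right hmu dist_nonneg).trans (hf.muDir_mul_dist_sub_le hU hy hy')
  obtain ⟨p, hp⟩ := exists_subset_closedBall_div_sqrt_two (V := F) hdist
  refine ⟨U.toAffineIsometryEquiv.trans (AffineIsometryEquiv.constVAdd ℝ F p), fun x hx => ?_⟩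
  calc ‖p + U x - f x‖ = dist (f x - U x) p := by rw [dist_comm, dist_eq_norm, sub_sub_eq_add_sub]
    _ ≤ c' * (2 * ε) / √2 := hp ⟨x, hx, rfl⟩
    _ = √2 * c' * ε := by
        rw [mul_left_comm, mul_div_right_comm, Real.div_sqrt, mul_assoc]

end AsymptoticImages

/-- If `A ⊆ ℝⁿ` is unbounded with `μ(A) ≥ 1/c'`, then `A` has the `√2·c'`-isometric
approximation property. -/
theorem mu_implies_iap {n : ℕ} (hn : 1 ≤ n) (c' : ℝ) (hc' : 0 < c')
    (A : Set (EuclideanSpace ℝ (Fin n))) (hA : ¬ IsBounded A) (hmu : 1 / c' ≤ muDir A) :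
    ∀ ε : ℝ, 0 ≤ ε → ∀ f : EuclideanSpace ℝ (Fin n) → EuclideanSpace ℝ (Fin n),
      IsNearisometryOn f A ε →
      ∃ T : EuclideanSpace ℝ (Fin n) → EuclideanSpace ℝ (Fin n),
        Isometry T ∧ ∀ x ∈ A, ‖T x - f x‖ ≤ Real.sqrt 2 * c' * ε := by
  intro ε _ f hf
  obtain ⟨T, hT⟩ := mu_implies_iap_general rfl hc' hmu hf
  exact ⟨T, T.isometry, hT⟩
end

section
/- Let n ≥ 2, write points of ℝⁿ = ℝ^{n−1} × ℝ as z = (x,t), let M ≥ 1, and define g : ℝⁿ → ℝⁿ by g(x,t) = (x, t + √|x|) if |x| ≤ M and g(x,t) = (x, t + √M) if |x| ≥ M. Let r = 1/(8√M) and let z = (x,t), z′ = (x′,t′) ∈ ℝⁿ satisfy |x| ≤ |x′| ≤ M, |t| ≤ r|x′| and |t′| ≤ 3r|x′|. Then ||g z′ − g z| − |z′ − z|| ≤ 1. -/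
open Filter Metric Bornology

/-- The auxiliary map `g : ℝⁿ = ℝ^{n-1} × ℝ → ℝⁿ`, `g(x,t) = (x, t + √|x|)` for `|x| ≤ M`
and `g(x,t) = (x, t + √M)` for `|x| ≥ M`.  Here `ℝ^{n-1} × ℝ` carries the euclidean
(`ℓ²`) norm, via `WithLp 2`. -/
noncomputable def gMap {m : ℕ} (M : ℝ) (z : WithLp 2 (EuclideanSpace ℝ (Fin m) × ℝ)) :
    WithLp 2 (EuclideanSpace ℝ (Fin m) × ℝ) :=
  (WithLp.equiv 2 _).symm
    ((WithLp.equiv 2 _ z).1,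
      (WithLp.equiv 2 _ z).2 +
        if ‖(WithLp.equiv 2 _ z).1‖ ≤ M then Real.sqrt ‖(WithLp.equiv 2 _ z).1‖
        else Real.sqrt M)

/-!
The map `g` shears the last coordinate by `h(x) = √(min |x| M)`, and does not move `x`. Hence
`A = |g z' - g z|` and `B = |z' - z|` are both at least `|x' - x|`, and their squares differ by
`(u + s)² - u² = s (2u + s)`, where `u = t' - t` and `s = h(x') - h(x)`. As long as
`2|u| ≤ h(x') + h(x)`, the second factor is at most `2 (h(x') + h(x))` in absolute value, so
`|A² - B²| ≤ 2 |h(x')² - h(x)²| ≤ 2 |x' - x| ≤ A + B`, that is, `|A - B| ≤ 1`.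
-/

theorem abs_sub_le_of_abs_sq_sub_sq_le_mul_add {a b c : ℝ} (ha : 0 ≤ a) (hb : 0 ≤ b) (hc : 0 ≤ c)
    (h : |a ^ 2 - b ^ 2| ≤ c * (a + b)) : |a - b| ≤ c := by
  rcases (add_nonneg ha hb).eq_or_lt with hab | hab
  · obtain ⟨rfl, rfl⟩ := (add_eq_zero_iff_of_nonneg ha hb).1 hab.symm
    simpa using hc
  · refine le_of_mul_le_mul_right ?_ hab
    calc |a - b| * (a + b) = |a ^ 2 - b ^ 2| := by
          rw [sq_sub_sq, abs_mul, abs_of_pos hab, mul_comm]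
      _ ≤ c * (a + b) := h

theorem abs_add_sub_sq_sub_sq_le {u p q : ℝ} (hp : 0 ≤ p) (hq : 0 ≤ q)
    (hu : |u| ≤ (p + q) / 2) : |(u + (p - q)) ^ 2 - u ^ 2| ≤ 2 * |p ^ 2 - q ^ 2| := by
  have hpq : |p - q| ≤ p + q := by
    simpa [abs_of_nonneg, hp, hq] using abs_sub p q
  have hfactor : |2 * u + (p - q)| ≤ 2 * (p + q) :=
    calc |2 * u + (p - q)| ≤ |2 * u| + |p - q| := abs_add_le _ _
      _ = 2 * |u| + |p - q| := by rw [abs_mul, abs_two]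
      _ ≤ 2 * (p + q) := by linarith
  calc |(u + (p - q)) ^ 2 - u ^ 2| = |2 * u + (p - q)| * |p - q| := by rw [← abs_mul]; ring_nf
    _ ≤ 2 * (p + q) * |p - q| := by gcongr
    _ = 2 * |p ^ 2 - q ^ 2| := by
      rw [sq_sub_sq, abs_mul, abs_of_nonneg (add_nonneg hp hq), mul_assoc]

theorem div_sqrt_le_sqrt_of_le {a b : ℝ} (ha : 0 ≤ a) (hab : a ≤ b) : a / √b ≤ √a :=
  div_le_of_le_mul₀ (Real.sqrt_nonneg b) (Real.sqrt_nonneg a) <|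
    calc a = √a * √a := (Real.mul_self_sqrt ha).symm
      _ ≤ √a * √b := by gcongr

theorem abs_norm_sub_norm_le_of_norm_fst_eq {E F : Type*} [SeminormedAddCommGroup E]
    [SeminormedAddCommGroup F] {v w : WithLp 2 (E × F)} {c : ℝ} (hc : 0 ≤ c)
    (hfst : ‖v.fst‖ = ‖w.fst‖) (hsnd : |‖v.snd‖ ^ 2 - ‖w.snd‖ ^ 2| ≤ 2 * c * ‖w.fst‖) :
    |‖v‖ - ‖w‖| ≤ c := by
  have hv : ‖w.fst‖ ≤ ‖v‖ := hfst ▸ WithLp.norm_fst_le E v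
  have hw : ‖w.fst‖ ≤ ‖w‖ := WithLp.norm_fst_le E w
  apply abs_sub_le_of_abs_sq_sub_sq_le_mul_add (norm_nonneg v) (norm_nonneg w) hc
  calc |‖v‖ ^ 2 - ‖w‖ ^ 2| = |‖v.snd‖ ^ 2 - ‖w.snd‖ ^ 2| := by
        rw [WithLp.prod_norm_sq_eq_of_L2, WithLp.prod_norm_sq_eq_of_L2, hfst,
          add_sub_add_left_eq_sub]
    _ ≤ c * (‖w.fst‖ + ‖w.fst‖) := by linarith
    _ ≤ c * (‖v‖ + ‖w‖) := by gcongr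

section gMap

variable {m : ℕ} {M : ℝ}

theorem gMap_fst (z : WithLp 2 (EuclideanSpace ℝ (Fin m) × ℝ)) : (gMap M z).fst = z.fst :=
  rfl

theorem gMap_snd (z : WithLp 2 (EuclideanSpace ℝ (Fin m) × ℝ)) :
    (gMap M z).snd = z.snd + √(min ‖z.fst‖ M) := by
  rw [min_def, apply_ite Real.sqrt]
  rfl

theorem gMap_nearisometry_bounded_part_general (hM : 0 ≤ M)
    (z z' : WithLp 2 (EuclideanSpace ℝ (Fin m) × ℝ))
    (h : |z'.snd - z.snd| ≤ (√(min ‖z'.fst‖ M) + √(min ‖z.fst‖ M)) / 2) :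
    |‖gMap M z' - gMap M z‖ - ‖z' - z‖| ≤ 1 := by
  have hmin (w : WithLp 2 (EuclideanSpace ℝ (Fin m) × ℝ)) : 0 ≤ min ‖w.fst‖ M :=
    le_min (norm_nonneg _) hM
  have hsnd : (gMap M z' - gMap M z).snd =
      z'.snd - z.snd + (√(min ‖z'.fst‖ M) - √(min ‖z.fst‖ M)) := by
    rw [WithLp.sub_snd, gMap_snd, gMap_snd, add_sub_add_comm]
  have hclip : |min ‖z'.fst‖ M - min ‖z.fst‖ M| ≤ |‖z'.fst‖ - ‖z.fst‖| :=
    (abs_min_sub_min_le_max _ _ _ _).trans_eq (by simp)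
  apply abs_norm_sub_norm_le_of_norm_fst_eq zero_le_one
  · simp only [WithLp.sub_fst, gMap_fst]
  calc |‖(gMap M z' - gMap M z).snd‖ ^ 2 - ‖(z' - z).snd‖ ^ 2|
      = |(z'.snd - z.snd + (√(min ‖z'.fst‖ M) - √(min ‖z.fst‖ M))) ^ 2
          - (z'.snd - z.snd) ^ 2| := by
        rw [hsnd, WithLp.sub_snd, Real.norm_eq_abs, Real.norm_eq_abs, sq_abs, sq_abs]
    _ ≤ 2 * |√(min ‖z'.fst‖ M) ^ 2 - √(min ‖z.fst‖ M) ^ 2| :=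
        abs_add_sub_sq_sub_sq_le (Real.sqrt_nonneg _) (Real.sqrt_nonneg _) h
    _ = 2 * |min ‖z'.fst‖ M - min ‖z.fst‖ M| := by
        rw [Real.sq_sqrt (hmin z'), Real.sq_sqrt (hmin z)]
    _ ≤ 2 * |‖z'.fst‖ - ‖z.fst‖| := by rel [hclip]
    _ ≤ 2 * 1 * ‖(z' - z).fst‖ := by
        rw [mul_one, WithLp.sub_fst]
        gcongr
        exact abs_norm_sub_norm_le _ _

end gMap

theorem abs_sub_le_half_sqrt {M b t t' : ℝ} (hb : 0 ≤ b) (hbM : b ≤ M)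
    (ht : |t| ≤ 1 / (8 * √M) * b) (ht' : |t'| ≤ 3 * (1 / (8 * √M)) * b) : |t' - t| ≤ √b / 2 :=
  calc |t' - t| ≤ |t'| + |t| := abs_sub t' t
    _ ≤ 3 * (1 / (8 * √M)) * b + 1 / (8 * √M) * b := add_le_add ht' ht
    _ = b / √M / 2 := by ring
    _ ≤ √b / 2 := by gcongr; exact div_sqrt_le_sqrt_of_le hb hbM

/-- Lemma 3.3: with `M ≥ 1`, `r = 1/(8√M)`, if `|x| ≤ |x'| ≤ M`, `|t| ≤ r|x'|` and
`|t'| ≤ 3r|x'|`, then `||g z' - g z| - |z' - z|| ≤ 1` for `z = (x,t)`, `z' = (x',t')`. -/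
theorem gMap_nearisometry_bounded_part {n : ℕ} (hn : 2 ≤ n) (M : ℝ) (hM : 1 ≤ M)
    (r : ℝ) (hr : r = 1 / (8 * Real.sqrt M))
    (x x' : EuclideanSpace ℝ (Fin (n - 1))) (t t' : ℝ)
    (hxx' : ‖x‖ ≤ ‖x'‖) (hx'M : ‖x'‖ ≤ M)
    (ht : |t| ≤ r * ‖x'‖) (ht' : |t'| ≤ 3 * r * ‖x'‖) :
    |‖gMap M ((WithLp.equiv 2 _).symm (x', t')) - gMap M ((WithLp.equiv 2 _).symm (x, t))‖ -
      ‖(WithLp.equiv 2 (EuclideanSpace ℝ (Fin (n - 1)) × ℝ)).symm (x', t') -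
        (WithLp.equiv 2 (EuclideanSpace ℝ (Fin (n - 1)) × ℝ)).symm (x, t)‖| ≤ 1 := by
  refine gMap_nearisometry_bounded_part_general (zero_le_one.trans hM) _ _
    ((abs_sub_le_half_sqrt (norm_nonneg x') hx'M (hr ▸ ht) (hr ▸ ht')).trans ?_)
  simp [min_eq_left hx'M, div_le_div_iff_of_pos_right]
end

section
/- Let M > 0 and let x, x′ ∈ ℝⁿ with |x| < M and |x′| > M. Let x″ be the point of the line segment [x, x′] with |x″| = M. Then |x′|·|x − x″| ≤ 2M·|x − x′|. -/
open Metric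

/-!
The key estimate is the degenerate case of Ptolemy's inequality in which three of the four points
`0, x, y, z` lie on a line. While the general inequality needs an inner product, this case follows
from the triangle inequality alone: if `y = a x + b z` with `a + b = 1`, then
`b ‖z‖ ≤ ‖y‖ + a ‖x‖`, and multiplying by `‖x - z‖` turns `a` and `b` into `‖y - z‖` and `‖x - y‖`.
The constant `2 M` bounds `‖x‖ + ‖y‖`, which suffices because `‖y - z‖ ≤ ‖x - z‖`.
-/

section SeminormedSpace

variable {E : Type*} [SeminormedAddCommGroup E] [NormedSpace ℝ E]

theorem norm_mul_norm_sub_le_of_mem_segment {x y z : E} (hy : y ∈ segment ℝ x z) :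
    ‖z‖ * ‖x - y‖ ≤ ‖x‖ * ‖y - z‖ + ‖y‖ * ‖x - z‖ := by
  obtain ⟨a, b, ha, hb, hab, rfl⟩ := hy
  obtain rfl : a = 1 - b := eq_sub_of_add_eq hab
  set y := (1 - b) • x + b • z
  have norm_sub_left : ‖x - y‖ = b * ‖x - z‖ := by
    rw [← norm_smul_of_nonneg hb]
    congr 1
    module
  have norm_sub_right : ‖y - z‖ = (1 - b) * ‖x - z‖ := by
    rw [← norm_smul_of_nonneg ha]
    congr 1
    module
  have norm_endpoint_le : b * ‖z‖ ≤ ‖y‖ + (1 - b) * ‖x‖ := by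
    rw [← norm_smul_of_nonneg hb, ← norm_smul_of_nonneg ha]
    exact norm_le_add_norm_add' ((1 - b) • x) (b • z)
  calc ‖z‖ * ‖x - y‖ = b * ‖z‖ * ‖x - z‖ := by rw [norm_sub_left]; ring
    _ ≤ (‖y‖ + (1 - b) * ‖x‖) * ‖x - z‖ := by gcongr
    _ = ‖x‖ * ‖y - z‖ + ‖y‖ * ‖x - z‖ := by rw [norm_sub_right]; ring

theorem segment_norm_estimate_general {M : ℝ} {x x' x'' : E} (hx : ‖x‖ ≤ M)
    (hseg : x'' ∈ segment ℝ x x') (hx'' : ‖x''‖ ≤ M) :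
    ‖x'‖ * ‖x - x''‖ ≤ 2 * M * ‖x - x'‖ := by
  have norm_sub_right_le : ‖x'' - x'‖ ≤ ‖x - x'‖ :=
    norm_sub_le_of_mem_segment (segment_symm ℝ x x' ▸ hseg)
  have hM : 0 ≤ M := (norm_nonneg x).trans hx
  calc ‖x'‖ * ‖x - x''‖ ≤ ‖x‖ * ‖x'' - x'‖ + ‖x''‖ * ‖x - x'‖ :=
        norm_mul_norm_sub_le_of_mem_segment hseg
    _ ≤ M * ‖x - x'‖ + M * ‖x - x'‖ := by gcongr
    _ = 2 * M * ‖x - x'‖ := by ring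

end SeminormedSpace

/-- If `|x| < M < |x'|` and `x''` is the point of the segment `[x, x']` with `|x''| = M`,
then `|x'| |x - x''| ≤ 2 M |x - x'|`. -/
theorem segment_norm_estimate {n : ℕ} (M : ℝ) (hM : 0 < M)
    (x x' x'' : EuclideanSpace ℝ (Fin n))
    (hx : ‖x‖ < M) (hx' : M < ‖x'‖)
    (hseg : x'' ∈ segment ℝ x x') (hx'' : ‖x''‖ = M) :
    ‖x'‖ * ‖x - x''‖ ≤ 2 * M * ‖x - x'‖ :=
  segment_norm_estimate_general hx.le hseg hx''.le
end

section
/- Let n ≥ 2, M ≥ 1, r = 1/(8√M), 0 < λ ≤ 1, and let f : A′(r,λ) → ℝⁿ be defined by f z = g z for z ∈ A_r and f z = 0 for z ∈ B̄(0,λ) \ A_r. Let A ⊆ A′(r,λ) be unbounded and let T : ℝⁿ → ℝⁿ be a linear isometry with sup{|T x − f x| : x ∈ A} < ∞. Then T u = u for every cluster direction u of A. -/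
/-!
Outside the ball, the points of `A` lie in the cone, where `f = g` moves points by at most `√M`.
Hence `T x - x` stays bounded on `A` outside the ball, and dividing by `‖x‖ → ∞` makes `T - id`
vanish at every limit of `‖x‖⁻¹ • x`.
-/

open Filter Metric Bornology

/-- The set `A_r = {(x,t) : |t| ≤ r |x|}` in `ℝ^{n-1} × ℝ`. -/
def coneSet {m : ℕ} (r : ℝ) : Set (WithLp 2 (EuclideanSpace ℝ (Fin m) × ℝ)) :=
  {z | |(WithLp.equiv 2 _ z).2| ≤ r * ‖(WithLp.equiv 2 _ z).1‖}

theorem cobounded_inf_principal_le_of_subset_union {α : Type*} [Bornology α] {A B C : Set α}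
    (hA : A ⊆ C ∪ B) (hB : IsBounded B) : cobounded α ⊓ 𝓟 A ≤ cobounded α ⊓ 𝓟 C := by
  refine le_inf inf_le_left (le_principal_iff.mpr ?_)
  filter_upwards [mem_inf_of_left (isBounded_def.mp hB), mem_inf_of_right (mem_principal_self A)]
    with x hxB hxA
  exact (hA hxA).resolve_right hxB

section Sublinear

open Asymptotics

theorem isLittleO_id_cobounded_inf_principal_of_norm_le {E F : Type*}
    [NormedAddCommGroup E] [SeminormedAddCommGroup F] {h : E → F} {A : Set E} {K : ℝ}
    (hK : ∀ x ∈ A, ‖h x‖ ≤ K) : h =o[cobounded E ⊓ 𝓟 A] (fun x => x) := by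
  have hbounded : h =O[𝓟 A] (fun _ => (1 : ℝ)) :=
    isBigO_principal.mpr ⟨K, by simpa using hK⟩
  exact (hbounded.mono inf_le_right).trans_isLittleO
    ((isLittleO_const_id_cobounded (1 : ℝ)).mono inf_le_left)

variable {E F : Type*} [NormedAddCommGroup E] [NormedSpace ℝ E] [NormedAddCommGroup F]
  [NormedSpace ℝ F] {A : Set E}

theorem IsClusterDirection.map_eq_zero_of_isLittleO {u : E} (hu : IsClusterDirection A u)
    (L : E →L[ℝ] F) (hL : L =o[cobounded E ⊓ 𝓟 A] (fun x => x)) : L u = 0 := by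
  obtain ⟨x, hxA, hx_norm, hxu⟩ := hu
  have hx : Tendsto x atTop (cobounded E ⊓ 𝓟 A) :=
    tendsto_inf.mpr ⟨tendsto_norm_atTop_iff_cobounded.mp hx_norm,
      tendsto_principal.mpr (.of_forall hxA)⟩
  have hzero : Tendsto (fun j => L (‖x j‖⁻¹ • x j)) atTop (nhds 0) := by
    simpa only [Function.comp_apply, map_smul] using
      (hL.comp_tendsto hx).norm_right.tendsto_inv_smul_nhds_zero
  exact tendsto_nhds_unique ((L.continuous.tendsto u).comp hxu) hzero

theorem linearIsometry_id_on_clusterDirections_general {f : E → E}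
    (hf : (fun x => f x - x) =o[cobounded E ⊓ 𝓟 A] (fun x => x)) (T : E →L[ℝ] E)
    (hT : (fun x => T x - f x) =o[cobounded E ⊓ 𝓟 A] (fun x => x)) :
    ∀ u, IsClusterDirection A u → T u = u := by
  intro u hu
  have hT_sub_id : (T - ContinuousLinearMap.id ℝ E) =o[cobounded E ⊓ 𝓟 A] (fun x => x) :=
    (hT.add hf).congr_left fun x => sub_add_sub_cancel (T x) (f x) x
  exact sub_eq_zero.mp (hu.map_eq_zero_of_isLittleO _ hT_sub_id)

end Sublinear

section GMap

variable {m : ℕ} (M : ℝ) (z : WithLp 2 (EuclideanSpace ℝ (Fin m) × ℝ))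

theorem gMap_sub_self : gMap M z - z = WithLp.toLp 2 (0, √(min ‖z.fst‖ M)) := by
  simp only [min_def, apply_ite Real.sqrt]
  apply (WithLp.equiv 2 _).injective
  ext <;> simp [gMap]

theorem norm_gMap_sub_self_le : ‖gMap M z - z‖ ≤ √M := by
  rw [gMap_sub_self, WithLp.norm_toLp_snd, Real.norm_of_nonneg (Real.sqrt_nonneg _)]
  exact Real.sqrt_le_sqrt (min_le_right _ _)

end GMap

/-- Lemma 3.9: if `f` equals `g` on `A_r` and vanishes on `B̄(0, λ) \ A_r`, `A ⊆ A_r ∪ B̄(0, λ)`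
is unbounded and `T` is a linear isometry of `ℝⁿ` with `sup_{x ∈ A} |T x - f x| < ∞`, then
`T u = u` for every cluster direction `u` of `A`. -/
theorem linearIsometry_id_on_clusterDirections {n : ℕ} (hn : 2 ≤ n) (M : ℝ) (hM : 1 ≤ M)
    (r : ℝ) (hr : r = 1 / (8 * Real.sqrt M)) (lam : ℝ) (hlam0 : 0 < lam) (hlam1 : lam ≤ 1)
    (f : WithLp 2 (EuclideanSpace ℝ (Fin (n - 1)) × ℝ) →
      WithLp 2 (EuclideanSpace ℝ (Fin (n - 1)) × ℝ))
    (hf1 : ∀ z ∈ coneSet (m := n - 1) r, f z = gMap M z)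
    (hf2 : ∀ z ∈ closedBall (0 : WithLp 2 (EuclideanSpace ℝ (Fin (n - 1)) × ℝ)) lam \
      coneSet (m := n - 1) r, f z = 0)
    (A : Set (WithLp 2 (EuclideanSpace ℝ (Fin (n - 1)) × ℝ)))
    (hA : A ⊆ coneSet (m := n - 1) r ∪ closedBall 0 lam) (hAu : ¬ IsBounded A)
    (T : WithLp 2 (EuclideanSpace ℝ (Fin (n - 1)) × ℝ) →ₗᵢ[ℝ]
      WithLp 2 (EuclideanSpace ℝ (Fin (n - 1)) × ℝ))
    (hT : ∃ K : ℝ, ∀ x ∈ A, ‖T x - f x‖ ≤ K) :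
    ∀ u, IsClusterDirection A u → T u = u := by
  obtain ⟨K, hK⟩ := hT
  have hf_cone : ∀ z ∈ coneSet r, ‖f z - z‖ ≤ √M :=
    fun z hz => hf1 z hz ▸ norm_gMap_sub_self_le M z
  exact linearIsometry_id_on_clusterDirections_general
    ((isLittleO_id_cobounded_inf_principal_of_norm_le hf_cone).mono
      (cobounded_inf_principal_le_of_subset_union hA isBounded_closedBall))
    T.toContinuousLinearMap (isLittleO_id_cobounded_inf_principal_of_norm_le hK)
end

section
/- Let E and F be real Hilbert spaces, let ε > 0, let x, y ∈ E with |x| ≥ 2ε and |y| ≥ 2ε, and let a, b ∈ F satisfy ||a| − |x|| ≤ ε, ||b| − |y|| ≤ ε and ||a − b| − |x − y|| ≤ ε (so a, b ≠ 0). Then |a/|a| − b/|b||² ≤ 4·|x/|x| − y/|y||² + 24ε/|x| + 24ε/|y| + 12ε²/(|x|·|y|). -/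
open RealInnerProductSpace

/-!
Write `p` for the central projection. Expanding squares gives the identity
`|x||y| |p x - p y|² = |x - y|² - (|x| - |y|)²`, in which the right-hand side involves only the
mutual distances of `0`, `x` and `y`, so it changes by a controlled amount when `x, y` are
replaced by `a, b`. Since `|x| ≥ 2ε` forces `|x| ≤ 2|a|`, passing from the factor `|a||b|`
to `|x||y|` costs at most a factor `4`.
-/

theorem sq_le_sq_add_two_mul_abs_of_abs_sub_le {u v δ : ℝ} (h : |u - v| ≤ δ) :
    v ^ 2 ≤ u ^ 2 + 2 * δ * |v| := by
  have hcross : |u - v| * |v| ≤ δ * |v| := mul_le_mul_of_nonneg_right h (abs_nonneg v)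
  have hneg : -(|u - v| * |v|) ≤ (u - v) * v := abs_mul (u - v) v ▸ neg_abs_le _
  calc v ^ 2 ≤ v ^ 2 + (u - v) ^ 2 := le_add_of_nonneg_right (sq_nonneg _)
    _ = u ^ 2 - 2 * ((u - v) * v) := by ring
    _ ≤ u ^ 2 + 2 * δ * |v| := by linarith

section CentralProjection

open NormedSpace (normalize)

variable {E F : Type*} [NormedAddCommGroup E] [InnerProductSpace ℝ E]
  [NormedAddCommGroup F] [InnerProductSpace ℝ F]

theorem norm_mul_norm_mul_norm_normalize_sub_sq (x y : E) :
    ‖x‖ * ‖y‖ * ‖normalize x - normalize y‖ ^ 2 = ‖x - y‖ ^ 2 - (‖x‖ - ‖y‖) ^ 2 := by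
  rcases eq_or_ne x 0 with rfl | hx
  · simp
  rcases eq_or_ne y 0 with rfl | hy
  · simp
  have hinner : ⟪x, y⟫ = ‖x‖ * ‖y‖ * ⟪normalize x, normalize y⟫ := by
    conv_lhs => rw [← NormedSpace.norm_smul_normalize x, ← NormedSpace.norm_smul_normalize y]
    rw [real_inner_smul_left, real_inner_smul_right, mul_assoc]
  rw [norm_sub_sq_real, norm_sub_sq_real, hinner, NormedSpace.norm_normalize hx,
    NormedSpace.norm_normalize hy]
  ring

theorem norm_mul_norm_mul_norm_normalize_sub_sq_le {ε : ℝ} {x y : E} {a b : F}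
    (ha : |‖a‖ - ‖x‖| ≤ ε) (hb : |‖b‖ - ‖y‖| ≤ ε) (hab : ‖a - b‖ ≤ ‖x - y‖ + ε) :
    ‖a‖ * ‖b‖ * ‖normalize a - normalize b‖ ^ 2 ≤
      ‖x‖ * ‖y‖ * ‖normalize x - normalize y‖ ^ 2 + 6 * ε * ‖x - y‖ + ε ^ 2 := by
  have hε : 0 ≤ ε := (abs_nonneg _).trans ha
  have hradial : |(‖a‖ - ‖b‖) - (‖x‖ - ‖y‖)| ≤ 2 * ε := by
    rw [sub_sub_sub_comm, two_mul]
    exact (abs_sub _ _).trans (add_le_add ha hb)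
  have hradial_sq : (‖x‖ - ‖y‖) ^ 2 ≤ (‖a‖ - ‖b‖) ^ 2 + 4 * ε * ‖x - y‖ :=
    calc (‖x‖ - ‖y‖) ^ 2 ≤ (‖a‖ - ‖b‖) ^ 2 + 2 * (2 * ε) * |‖x‖ - ‖y‖| :=
          sq_le_sq_add_two_mul_abs_of_abs_sub_le hradial
      _ ≤ (‖a‖ - ‖b‖) ^ 2 + 2 * (2 * ε) * ‖x - y‖ := by
          gcongr
          exact abs_norm_sub_norm_le x y
      _ = (‖a‖ - ‖b‖) ^ 2 + 4 * ε * ‖x - y‖ := by ring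
  have hdist_sq : ‖a - b‖ ^ 2 ≤ (‖x - y‖ + ε) ^ 2 := by gcongr
  rw [norm_mul_norm_mul_norm_normalize_sub_sq, norm_mul_norm_mul_norm_normalize_sub_sq]
  linarith

theorem central_projection_estimate_general {ε : ℝ} (hε : 0 < ε) {x y : E}
    (hx : 2 * ε ≤ ‖x‖) (hy : 2 * ε ≤ ‖y‖) {a b : F} (ha : |‖a‖ - ‖x‖| ≤ ε)
    (hb : |‖b‖ - ‖y‖| ≤ ε) (hab : ‖a - b‖ ≤ ‖x - y‖ + ε) :
    ‖normalize a - normalize b‖ ^ 2 ≤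
      4 * ‖normalize x - normalize y‖ ^ 2 + 24 * ε / ‖x‖ + 24 * ε / ‖y‖ +
        4 * ε ^ 2 / (‖x‖ * ‖y‖) := by
  have hx_pos : 0 < ‖x‖ := by linarith
  have hy_pos : 0 < ‖y‖ := by linarith
  have hxa : ‖x‖ ≤ 2 * ‖a‖ := by linarith [(abs_le.1 ha).1]
  have hyb : ‖y‖ ≤ 2 * ‖b‖ := by linarith [(abs_le.1 hb).1]
  have hscaled : ‖x‖ * ‖y‖ * ‖normalize a - normalize b‖ ^ 2 ≤
      4 * (‖x‖ * ‖y‖ * ‖normalize x - normalize y‖ ^ 2 + 6 * ε * (‖x‖ + ‖y‖) + ε ^ 2) :=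
    calc ‖x‖ * ‖y‖ * ‖normalize a - normalize b‖ ^ 2
        ≤ (2 * ‖a‖) * (2 * ‖b‖) * ‖normalize a - normalize b‖ ^ 2 := by gcongr
      _ = 4 * (‖a‖ * ‖b‖ * ‖normalize a - normalize b‖ ^ 2) := by ring
      _ ≤ 4 * (‖x‖ * ‖y‖ * ‖normalize x - normalize y‖ ^ 2 + 6 * ε * ‖x - y‖ + ε ^ 2) := by
          gcongr
          exact norm_mul_norm_mul_norm_normalize_sub_sq_le ha hb hab
      _ ≤ 4 * (‖x‖ * ‖y‖ * ‖normalize x - normalize y‖ ^ 2 + 6 * ε * (‖x‖ + ‖y‖) + ε ^ 2) := by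
          gcongr
          exact norm_sub_le x y
  refine ((le_div_iff₀' (mul_pos hx_pos hy_pos)).2 hscaled).trans_eq ?_
  field_simp
  ring

end CentralProjection

/-- Lemma 4.2: if `|x|, |y| ≥ 2ε` and the map `0 ↦ 0, x ↦ a, y ↦ b` is an `ε`-nearisometry,
then `|p a - p b|² ≤ 4 |p x - p y|² + 24 ε/|x| + 24 ε/|y| + 12 ε²/(|x||y|)`, where
`p z = z/|z|` is the central projection. -/
theorem central_projection_estimate {E F : Type*}
    [NormedAddCommGroup E] [InnerProductSpace ℝ E]
    [NormedAddCommGroup F] [InnerProductSpace ℝ F]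
    (ε : ℝ) (hε : 0 < ε) (x y : E) (hx : 2 * ε ≤ ‖x‖) (hy : 2 * ε ≤ ‖y‖)
    (a b : F) (ha : |‖a‖ - ‖x‖| ≤ ε) (hb : |‖b‖ - ‖y‖| ≤ ε)
    (hab : |‖a - b‖ - ‖x - y‖| ≤ ε) :
    ‖‖a‖⁻¹ • a - ‖b‖⁻¹ • b‖ ^ 2 ≤
      4 * ‖‖x‖⁻¹ • x - ‖y‖⁻¹ • y‖ ^ 2 + 24 * ε / ‖x‖ + 24 * ε / ‖y‖ +
        12 * ε ^ 2 / (‖x‖ * ‖y‖) :=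
  (central_projection_estimate_general hε hx hy ha hb (by linarith [(abs_le.1 hab).2])).trans
    (by unfold NormedSpace.normalize; gcongr; norm_num)
end

section
/- Let E and F be real Hilbert spaces, let ε ≥ 0, let x, y ∈ E, and let a, b ∈ F satisfy ||a| − |x|| ≤ ε, ||b| − |y|| ≤ ε and ||a − b| − |x − y|| ≤ ε. Then |⟨a, b⟩ − ⟨x, y⟩| ≤ 2ε(|x| + |y| + ε). -/
open RealInnerProductSpace

theorem abs_sq_sub_sq_le_of_abs_sub_le {R : Type*} [CommRing R] [LinearOrder R]
    [IsStrictOrderedRing R] {p q ε : R} (h : |p - q| ≤ ε) :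
    |p ^ 2 - q ^ 2| ≤ ε * (2 * |q| + ε) := by
  have hε : 0 ≤ ε := (abs_nonneg _).trans h
  have h_add : |p + q| ≤ 2 * |q| + ε :=
    calc |p + q| = |2 * q + (p - q)| := by ring_nf
      _ ≤ |2 * q| + |p - q| := abs_add_le _ _
      _ ≤ 2 * |q| + ε := by rw [abs_mul, abs_two]; gcongr
  calc |p ^ 2 - q ^ 2| = |p - q| * |p + q| := by rw [sq_sub_sq, abs_mul, mul_comm]
    _ ≤ ε * (2 * |q| + ε) := by gcongr

theorem abs_norm_sq_sub_norm_sq_le {E F : Type*} [SeminormedAddGroup E] [SeminormedAddGroup F]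
    {x : E} {a : F} {ε : ℝ} (h : |‖a‖ - ‖x‖| ≤ ε) :
    |‖a‖ ^ 2 - ‖x‖ ^ 2| ≤ ε * (2 * ‖x‖ + ε) := by
  simpa only [abs_norm] using abs_sq_sub_sq_le_of_abs_sub_le h

section InnerProductSpace

variable {𝕜 𝕜' E F : Type*} [RCLike 𝕜] [RCLike 𝕜']
  [SeminormedAddCommGroup E] [InnerProductSpace 𝕜 E]
  [SeminormedAddCommGroup F] [InnerProductSpace 𝕜' F]

theorem two_mul_abs_re_inner_sub_re_inner_le (x y : E) (a b : F) :
    2 * |RCLike.re (inner 𝕜' a b) - RCLike.re (inner 𝕜 x y)| ≤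
      |‖a‖ ^ 2 - ‖x‖ ^ 2| + |‖b‖ ^ 2 - ‖y‖ ^ 2| + |‖a - b‖ ^ 2 - ‖x - y‖ ^ 2| := by
  have polarization : 2 * (RCLike.re (inner 𝕜' a b) - RCLike.re (inner 𝕜 x y)) =
      (‖a‖ ^ 2 - ‖x‖ ^ 2) + (‖b‖ ^ 2 - ‖y‖ ^ 2) - (‖a - b‖ ^ 2 - ‖x - y‖ ^ 2) := by
    rw [norm_sub_sq (𝕜 := 𝕜') a b, norm_sub_sq (𝕜 := 𝕜) x y]
    ring
  rw [← abs_two, ← abs_mul, polarization]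
  exact (abs_sub _ _).trans (by gcongr; exact abs_add_le _ _)

theorem inner_estimate_general {ε : ℝ} {x y : E} {a b : F}
    (ha : |‖a‖ - ‖x‖| ≤ ε) (hb : |‖b‖ - ‖y‖| ≤ ε) (hab : |‖a - b‖ - ‖x - y‖| ≤ ε) :
    |RCLike.re (inner 𝕜' a b) - RCLike.re (inner 𝕜 x y)| ≤ 2 * ε * (‖x‖ + ‖y‖ + ε) := by
  have hε : 0 ≤ ε := (abs_nonneg _).trans ha
  refine le_of_mul_le_mul_left ?_ (two_pos : (0 : ℝ) < 2)
  calc 2 * |RCLike.re (inner 𝕜' a b) - RCLike.re (inner 𝕜 x y)|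
      ≤ |‖a‖ ^ 2 - ‖x‖ ^ 2| + |‖b‖ ^ 2 - ‖y‖ ^ 2| + |‖a - b‖ ^ 2 - ‖x - y‖ ^ 2| :=
        two_mul_abs_re_inner_sub_re_inner_le x y a b
    _ ≤ ε * (2 * ‖x‖ + ε) + ε * (2 * ‖y‖ + ε) + ε * (2 * ‖x - y‖ + ε) := by
        gcongr
        · exact abs_norm_sq_sub_norm_sq_le ha
        · exact abs_norm_sq_sub_norm_sq_le hb
        · exact abs_norm_sq_sub_norm_sq_le hab
    _ ≤ ε * (2 * ‖x‖ + ε) + ε * (2 * ‖y‖ + ε) + ε * (2 * (‖x‖ + ‖y‖) + ε) := by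
        gcongr
        exact norm_sub_le x y
    _ = 2 * (2 * ε * (‖x‖ + ‖y‖ + ε)) - ε ^ 2 := by ring
    _ ≤ 2 * (2 * ε * (‖x‖ + ‖y‖ + ε)) := sub_le_self _ (sq_nonneg ε)

end InnerProductSpace

/-- Lemma 4.6: if the map `0 ↦ 0, x ↦ a, y ↦ b` is an `ε`-nearisometry, then
`|⟨a, b⟩ - ⟨x, y⟩| ≤ 2ε(|x| + |y| + ε)`. -/
theorem inner_estimate {E F : Type*}
    [NormedAddCommGroup E] [InnerProductSpace ℝ E]
    [NormedAddCommGroup F] [InnerProductSpace ℝ F]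
    (ε : ℝ) (hε : 0 ≤ ε) (x y : E) (a b : F)
    (ha : |‖a‖ - ‖x‖| ≤ ε) (hb : |‖b‖ - ‖y‖| ≤ ε) (hab : |‖a - b‖ - ‖x - y‖| ≤ ε) :
    |⟪a, b⟫ - ⟪x, y⟫| ≤ 2 * ε * (‖x‖ + ‖y‖ + ε) :=
  inner_estimate_general (𝕜 := ℝ) (𝕜' := ℝ) ha hb hab
end
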